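/- With notation as usual, define Q(B) = Σ_{u₂ ≤ ξ₃} u₂^{−n} · Σ'_{|t₁|,…,|tₙ| ≤ u₂^{9/10}/B^{4/5}} S(t₁,…,tₙ; u₂), and for U > 1 let Q_U(B) denote the contribution to Q(B) from u₂ ∈ (U/2, U]. Then there exists a positive constant C₅ such that for all U > 1, Q_U(B) = O(U^{9/10}·(log B)^{C₅}/B^{8/5}). -/

import Mathlib

open MvPolynomial Filter Pointwise

noncomputable section

/-- The linear form with coefficient vector `c`. -/
def linForm {R : Type*} [CommRing R] {n : ℕ} (c : Fin n → R) : MvPolynomial (Fin n) R :=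
  ∑ i, C (c i) * X i

/-- `ρ_F(m)`: the number of zeros of `F` in `(ℤ/mℤ)ⁿ`. -/
def rhoF {n : ℕ} (F : MvPolynomial (Fin n) ℤ) (m : ℕ) : ℕ :=
  Nat.card {a : Fin n → ZMod m // MvPolynomial.eval a (F.map (Int.castRingHom (ZMod m))) = 0}

/-- The discriminant `Δ(F) = ∏_{i₁<⋯<iₙ} |det(L_{i₁},…,L_{iₙ})|`, the product being over
all `n`-element subsets of the linear factors (parametrized by strictly monotone maps). -/
def discProd {n d : ℕ} (L : Fin d → Fin n → ℂ) : ℝ :=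
  ∏ᶠ g ∈ {g : Fin n → Fin d | StrictMono g},
    ‖Matrix.det (Matrix.of fun i j => L (g i) j)‖

/-- `F` is a decomposable form with linear factors `L₁,…,L_d` having
algebraic-integer coefficients. -/
def IsDecomp {n d : ℕ} (F : MvPolynomial (Fin n) ℤ) (L : Fin d → Fin n → ℂ) : Prop :=
  (∀ j i, IsIntegral ℤ (L j i)) ∧ F.map (Int.castRingHom ℂ) = ∏ j, linForm (L j)

/-- An integer is `k`-free if it is divisible by no `k`-th power of a prime. -/
def KFree (k : ℕ) (N : ℤ) : Prop := ∀ p : ℕ, p.Prime → ¬ ((p : ℤ) ^ k ∣ N)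

/-- `N_{F,k}(B)`. -/
def NFk {n : ℕ} (F : MvPolynomial (Fin n) ℤ) (k : ℕ) (B : ℝ) : ℕ :=
  Set.ncard {x : Fin n → ℤ | (∀ i, |(x i : ℝ)| ≤ B) ∧ KFree k (MvPolynomial.eval x F)}

def log1 (x : ℝ) : ℝ := max 1 (Real.log x)
def log2 (x : ℝ) : ℝ := log1 (log1 x)
def log3 (x : ℝ) : ℝ := log1 (log2 x)

/-- `ξ₁` is eventually increasing, tends to infinity and is `O(log₂ B / log₃ B)`. -/
def Xi1Good (ξ₁ : ℝ → ℝ) : Prop :=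
  (∃ B₀ : ℝ, ∀ ⦃B B' : ℝ⦄, B₀ ≤ B → B ≤ B' → ξ₁ B ≤ ξ₁ B') ∧
  Tendsto ξ₁ atTop atTop ∧ (ξ₁ =O[atTop] fun B => log2 B / log3 B)

def xi2 (n : ℕ) (B : ℝ) : ℝ := B ^ n * Real.log B ^ ((2 : ℝ) / 3)

def xi3 (C₁ : ℝ) (k : ℕ) (B : ℝ) : ℝ := C₁ * B ^ 2 * Real.log B ^ (-(2 * (k : ℝ)) / 3)

/-- `C(ξ₁) = ∏_{p ≤ ξ₁} p^{k-1}`. -/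
def Cxi (k : ℕ) (ξ : ℝ) : ℕ := ∏ᶠ p ∈ {p : ℕ | p.Prime ∧ (p : ℝ) ≤ ξ}, p ^ (k - 1)

/-- `𝒟(u₂) = ∏ p` over primes `ξ₁ < p ≤ (1/12)log(B²/u₂)`, `p ∤ u₂`, `p ≡ 1 (mod k)`. -/
def scrD (k : ℕ) (ξ₁ B : ℝ) (u₂ : ℕ) : ℕ :=
  ∏ᶠ p ∈ {p : ℕ | p.Prime ∧ ξ₁ < (p : ℝ) ∧ (p : ℝ) ≤ Real.log (B ^ 2 / (u₂ : ℝ)) / 12 ∧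
      ¬ p ∣ u₂ ∧ p % k = 1}, p

/-- The set `𝒮_p ⊆ 𝔽_pⁿ` attached to a factorization `F = F*·∏𝓛ᵢ` over `ℤ_p`. -/
def Sp {n : ℕ} (p : ℕ) (hp : p.Prime) {τ : ℕ}
    (𝓛 : Fin τ → Fin n → @PadicInt p ⟨hp⟩)
    (Fstar : MvPolynomial (Fin n) (@PadicInt p ⟨hp⟩)) (x : Fin n → ZMod p) : Prop :=
  (∃ i j : Fin τ, i < j ∧ (∑ m, (@PadicInt.toZMod p ⟨hp⟩) (𝓛 i m) * x m) = 0 ∧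
      (∑ m, (@PadicInt.toZMod p ⟨hp⟩) (𝓛 j m) * x m) = 0) ∨
  MvPolynomial.eval x (Fstar.map (@PadicInt.toZMod p ⟨hp⟩)) = 0

/-- The data `(𝓛ᵢ, F*)` is a factorization of `F` over `ℤ_p` with `F*` having no
linear factor over `ℚ_p`. -/
def IsPadicFact {n : ℕ} (F : MvPolynomial (Fin n) ℤ) (p : ℕ) (hp : p.Prime) {τ : ℕ}
    (𝓛 : Fin τ → Fin n → @PadicInt p ⟨hp⟩)
    (Fstar : MvPolynomial (Fin n) (@PadicInt p ⟨hp⟩)) : Prop :=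
  F.map (Int.castRingHom (@PadicInt p ⟨hp⟩)) = Fstar * ∏ i, linForm (𝓛 i) ∧
  ∀ c : Fin n → @Padic p ⟨hp⟩, (∃ i, c i ≠ 0) →
    ¬ (linForm c ∣ Fstar.map (@PadicInt.Coe.ringHom p ⟨hp⟩))

-- τ_F(p) intrinsically: number of linear factors of F mod p up to scaling
def tauFp {n : ℕ} (F : MvPolynomial (Fin n) ℤ) (p : ℕ) : ℕ :=
  Nat.card {c : Fin n → ZMod p //
    (∃ i, c i = 1 ∧ ∀ j, j < i → c j = 0) ∧
    linForm c ∣ F.map (Int.castRingHom (ZMod p))}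

def tauF {n : ℕ} (F : MvPolynomial (Fin n) ℤ) (m : ℕ) : ℕ :=
  ∏ p ∈ m.primeFactors, tauFp F p

def sigmaPow (α : ℝ) (m : ℕ) : ℝ := ∑ s ∈ m.divisors, (s : ℝ) ^ α

-- sup norm / lattice minimum / lattice point count
def supNorm {n : ℕ} (x : Fin n → ℤ) : ℕ := Finset.univ.sup fun i => (x i).natAbs

def latMin {n : ℕ} (Λ : AddSubgroup (Fin n → ℤ)) : ℕ :=
  sInf {m : ℕ | ∃ x ∈ Λ, x ≠ 0 ∧ supNorm x = m}

def NLat {n : ℕ} (Λ : AddSubgroup (Fin n → ℤ)) (B : ℝ) : ℕ :=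
  Set.ncard {x : Fin n → ℤ | x ∈ Λ ∧ ∀ i, |(x i : ℝ)| ≤ B}

-- the H_{u₁,u₂}(B) count
def Hcount {n : ℕ} (F : MvPolynomial (Fin n) ℤ)
    {τ : ∀ p : ℕ, p.Prime → ℕ}
    (𝓛 : ∀ (p : ℕ) (hp : p.Prime), Fin (τ p hp) → Fin n → @PadicInt p ⟨hp⟩)
    (Fstar : ∀ (p : ℕ) (hp : p.Prime), MvPolynomial (Fin n) (@PadicInt p ⟨hp⟩))
    (k u₁ u₂ D : ℕ) (B : ℝ) : ℕ :=
  Set.ncard {m : Fin n → ℤ | (∀ i, |(m i : ℝ)| ≤ B) ∧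
    (u₁ : ℤ) ∣ MvPolynomial.eval m F ∧ (u₂ : ℤ) ∣ MvPolynomial.eval m F ∧
    (∃ s : ℕ, s < D ∧ (D : ℤ) ∣ (MvPolynomial.eval m F - (u₁ : ℤ) * u₂ * (s : ℤ) ^ k)) ∧
    ∀ (p : ℕ) (hp : p.Prime), p ∣ u₁ * u₂ →
      ¬ Sp p hp (𝓛 p hp) (Fstar p hp) (fun i => ((m i : ZMod p)))}

-- N₃(B)
def N3count {n : ℕ} (F : MvPolynomial (Fin n) ℤ) (k : ℕ) (ξ₁ ξ₂ B : ℝ) : ℕ :=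
  Set.ncard {x : Fin n → ℤ | (∀ i, |(x i : ℝ)| ≤ B) ∧
    (∃ p : ℕ, p.Prime ∧ ξ₂ < (p : ℝ) ∧ (p : ℤ) ^ k ∣ MvPolynomial.eval x F) ∧
    (∀ p : ℕ, p.Prime → ξ₁ < (p : ℝ) → (p : ℝ) ≤ ξ₂ → ¬ ((p : ℤ) ^ 2 ∣ MvPolynomial.eval x F)) ∧
    (∀ p : ℕ, p.Prime → (p : ℤ) ^ k ∣ MvPolynomial.eval x F → ξ₁ < (p : ℝ))}

-- N₃*(B)
def N3starCount {n : ℕ}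
    {τ : ∀ p : ℕ, p.Prime → ℕ}
    (𝓛 : ∀ (p : ℕ) (hp : p.Prime), Fin (τ p hp) → Fin n → @PadicInt p ⟨hp⟩)
    (Fstar : ∀ (p : ℕ) (hp : p.Prime), MvPolynomial (Fin n) (@PadicInt p ⟨hp⟩))
    (ξ₁ B : ℝ) : ℕ :=
  Set.ncard {x : Fin n → ℤ | (∀ i, |(x i : ℝ)| ≤ B) ∧
    ∃ (p : ℕ) (hp : p.Prime), ξ₁ < (p : ℝ) ∧
      Sp p hp (𝓛 p hp) (Fstar p hp) (fun i => ((x i : ZMod p)))}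

-- N₃†(B)
def N3dag {n : ℕ} (F : MvPolynomial (Fin n) ℤ)
    {τ : ∀ p : ℕ, p.Prime → ℕ}
    (𝓛 : ∀ (p : ℕ) (hp : p.Prime), Fin (τ p hp) → Fin n → @PadicInt p ⟨hp⟩)
    (Fstar : ∀ (p : ℕ) (hp : p.Prime), MvPolynomial (Fin n) (@PadicInt p ⟨hp⟩))
    (k : ℕ) (ξ₁ ξ₂ B : ℝ) : ℕ :=
  Set.ncard {x : Fin n → ℤ | (∀ i, |(x i : ℝ)| ≤ B) ∧
    ∃ (u : ℤ) (q : ℕ), q.Prime ∧ ξ₂ < (q : ℝ) ∧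
      MvPolynomial.eval x F = u * (q : ℤ) ^ k ∧
      (∀ p : ℕ, p.Prime → (p : ℝ) ≤ ξ₁ → ¬ ((p : ℤ) ^ k ∣ u)) ∧
      (∀ p : ℕ, p.Prime → ξ₁ < (p : ℝ) → (p : ℝ) ≤ ξ₂ → ¬ ((p : ℤ) ^ 2 ∣ u)) ∧
      (∀ (p : ℕ) (hp : p.Prime), (p : ℤ) ∣ u →
        ¬ Sp p hp (𝓛 p hp) (Fstar p hp) (fun i => ((x i : ZMod p))))}

-- ℛ_l : congruence classes mod l = u₁u₂D
def Rset {n : ℕ} (F : MvPolynomial (Fin n) ℤ)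
    {τ : ∀ p : ℕ, p.Prime → ℕ}
    (𝓛 : ∀ (p : ℕ) (hp : p.Prime), Fin (τ p hp) → Fin n → @PadicInt p ⟨hp⟩)
    (Fstar : ∀ (p : ℕ) (hp : p.Prime), MvPolynomial (Fin n) (@PadicInt p ⟨hp⟩))
    (k u₁ u₂ D : ℕ) : Set (Fin n → ZMod (u₁ * u₂ * D)) :=
  {m | ∃ a : Fin n → ℤ, (∀ i, ((a i : ZMod (u₁ * u₂ * D))) = m i) ∧
    (u₁ : ℤ) ∣ MvPolynomial.eval a F ∧ (u₂ : ℤ) ∣ MvPolynomial.eval a F ∧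
    (∃ s : ℕ, s < D ∧ (D : ℤ) ∣ (MvPolynomial.eval a F - (u₁ : ℤ) * u₂ * (s : ℤ) ^ k)) ∧
    ∀ (p : ℕ) (hp : p.Prime), p ∣ u₁ * u₂ →
      ¬ Sp p hp (𝓛 p hp) (Fstar p hp) (fun i => ((a i : ZMod p)))}

-- exponential sum E_ℛ(t; l)
def Esum {n l : ℕ} (R : Set (Fin n → ZMod l)) (t : Fin n → ℤ) : ℂ :=
  ∑ᶠ a ∈ R, Complex.exp (-(2 * Real.pi * Complex.I) *
    (∑ i, ((a i).val : ℂ) * (t i : ℂ)) / (l : ℂ))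

def Mplus {n : ℕ} (l : ℕ) (R : Set (Fin n → ZMod l)) (B : ℝ) : ℝ :=
  (3 * B) ^ n * R.ncard / (l : ℝ) ^ n

def Mpp {n : ℕ} (l : ℕ) (R : Set (Fin n → ZMod l)) (B : ℝ) : ℝ :=
  B ^ n / (l : ℝ) ^ n *
    ∑ᶠ t ∈ {t : Fin n → ℤ | t ≠ 0 ∧ ∀ i, |(t i : ℝ)| ≤ (l : ℝ) / B},
      ‖Esum R t‖

-- S(t; p)
def Ssum {n : ℕ} (p : ℕ) (hp : p.Prime) {τ : ℕ}
    (𝓛 : Fin τ → Fin n → @PadicInt p ⟨hp⟩) (t : Fin n → ℤ) : ℂ :=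
  ∑ i : Fin τ,
    ∑ᶠ a ∈ {a : Fin n → ZMod p | (∑ m, (@PadicInt.toZMod p ⟨hp⟩) (𝓛 i m) * a m) = 0},
      Complex.exp ((2 * Real.pi * Complex.I) *
        (∑ m, ((a m).val : ℂ) * (t m : ℂ)) / (p : ℂ))

-- |S(t; l)| for squarefree l
def SabsSF {n : ℕ} {τ : ∀ p : ℕ, p.Prime → ℕ}
    (𝓛 : ∀ (p : ℕ) (hp : p.Prime), Fin (τ p hp) → Fin n → @PadicInt p ⟨hp⟩)
    (l : ℕ) (t : Fin n → ℤ) : ℝ :=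
  ∏ p ∈ l.primeFactors.attach,
    ‖Ssum p.1 (Nat.prime_of_mem_primeFactors p.2)
      (𝓛 p.1 (Nat.prime_of_mem_primeFactors p.2)) t‖

-- admissible u₂'s
def U2set (ξ₁ ξ₂ ξ₃ : ℝ) : Set ℕ :=
  {u | 0 < u ∧ (u : ℝ) ≤ ξ₃ ∧ Squarefree u ∧
    ∀ p ∈ u.primeFactors, ξ₁ < (p : ℝ) ∧ (p : ℝ) ≤ ξ₂}

-- extra defs for theorems

/-- `N₄(B)` from Lemma N4B. -/
def N4sum {n : ℕ} (F : MvPolynomial (Fin n) ℤ)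
    {τ : ∀ p : ℕ, p.Prime → ℕ}
    (𝓛 : ∀ (p : ℕ) (hp : p.Prime), Fin (τ p hp) → Fin n → @PadicInt p ⟨hp⟩)
    (Fstar : ∀ (p : ℕ) (hp : p.Prime), MvPolynomial (Fin n) (@PadicInt p ⟨hp⟩))
    (k : ℕ) (C₁ : ℝ) (ξ₁ : ℝ → ℝ) (B : ℝ) : ℝ :=
  ∑ᶠ u₁ ∈ {u₁ : ℕ | u₁ ∣ Cxi k (ξ₁ B)},
    ∑ᶠ u₂ ∈ U2set (ξ₁ B) (xi2 n B) (xi3 C₁ k B),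
      Mplus (u₁ * u₂ * scrD k (ξ₁ B) B u₂)
        (Rset F 𝓛 Fstar k u₁ u₂ (scrD k (ξ₁ B) B u₂)) B /
        (k : ℝ) ^ (scrD k (ξ₁ B) B u₂).primeFactors.card

/-- the inner truncated sum `Σ'_{|tᵢ|≤Y} |S(t;u₂)|`. -/
def Ssumbox {n : ℕ} {τ : ∀ p : ℕ, p.Prime → ℕ}
    (𝓛 : ∀ (p : ℕ) (hp : p.Prime), Fin (τ p hp) → Fin n → @PadicInt p ⟨hp⟩)
    (u₂ : ℕ) (Y : ℝ) : ℝ :=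
  ∑ᶠ t ∈ {t : Fin n → ℤ | t ≠ 0 ∧ ∀ i, |(t i : ℝ)| ≤ Y}, SabsSF 𝓛 u₂ t

/-- `Q` restricted to a set of `u₂`'s. -/
def QUgen {n : ℕ} {τ : ∀ p : ℕ, p.Prime → ℕ}
    (𝓛 : ∀ (p : ℕ) (hp : p.Prime), Fin (τ p hp) → Fin n → @PadicInt p ⟨hp⟩)
    (S : Set ℕ) (B : ℝ) : ℝ :=
  ∑ᶠ u₂ ∈ S, (1 / (u₂ : ℝ) ^ n) *
    Ssumbox 𝓛 u₂ ((u₂ : ℝ) ^ ((9 : ℝ) / 10) / B ^ ((4 : ℝ) / 5))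

/-- `l* = ∏_{p ≤ Ξ, p | u₂} p`. -/
def lstar (u₂ : ℕ) (Ξ : ℝ) : ℕ :=
  ∏ᶠ p ∈ {p : ℕ | p.Prime ∧ p ∣ u₂ ∧ (p : ℝ) ≤ Ξ}, p

section NonVanishing

lemma linForm_isHomogeneous {R : Type*} [CommRing R] {n : ℕ} (c : Fin n → R) :
    (linForm c).IsHomogeneous 1 := by
  refine IsHomogeneous.sum _ _ _ fun i _ => ?_
  simpa using (isHomogeneous_C (Fin n) (c i)).mul (isHomogeneous_X R i)

lemma eval_linForm {R : Type*} [CommRing R] {n : ℕ} (c v : Fin n → R) :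
    MvPolynomial.eval v (linForm c) = ∑ i, c i * v i := by
  simp [linForm]

lemma map_linForm {R S : Type*} [CommRing R] [CommRing S] (f : R →+* S) {n : ℕ}
    (c : Fin n → R) : (linForm c).map f = linForm (fun i => f (c i)) := by
  simp [linForm]

lemma irreducible_linForm {K : Type*} [Field K] {n : ℕ} {c : Fin n → K}
    (hc : linForm c ≠ 0) : Irreducible (linForm c) := by
  refine irreducible_of_totalDegree_eq_one ((linForm_isHomogeneous c).totalDegree hc) ?_
  intro x hx
  obtain ⟨m, hm⟩ := MvPolynomial.ne_zero_iff.mp hc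
  refine IsUnit.mk0 x ?_
  rintro rfl
  exact hm (zero_dvd_iff.mp (hx m))

lemma exists_map_eq_of_forall_map_algEquiv_eq {k K : Type*} [Field k] [Field K] [Algebra k K]
    [IsGalois k K] {ι : Type*} {P : MvPolynomial ι K}
    (h : ∀ σ : Gal(K/k), P.map (σ : K →+* K) = P) :
    ∃ P₀ : MvPolynomial ι k, P₀.map (algebraMap k K) = P := by
  refine MvPolynomial.mem_range_map_iff_coeffs_subset.mpr fun c hc => ?_
  obtain ⟨m, -, rfl⟩ := MvPolynomial.mem_coeffs_iff.mp hc
  refine (InfiniteGalois.mem_range_algebraMap_iff_fixed (k := k) _).mpr fun σ => ?_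
  simpa [coeff_map] using congrArg (coeff m) (h σ)

/-- If one linear factor over a Galois extension of an irreducible form vanishes at a rational
point, then all of them do. -/
lemma forall_eval_eq_zero_of_irreducible {k K : Type*} [Field k] [Field K] [Algebra k K]
    [IsGalois k K] {n d : ℕ} {F : MvPolynomial (Fin n) k} (hF : Irreducible F)
    {L : Fin d → Fin n → K} (hL : F.map (algebraMap k K) = ∏ j, linForm (L j))
    (v : Fin n → k) {j₀ : Fin d} (h₀ : ∑ i, L j₀ i * algebraMap k K (v i) = 0) (j : Fin d) :
    ∑ i, L j i * algebraMap k K (v i) = 0 := by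
  classical
  set w : Fin n → K := fun i => algebraMap k K (v i) with hw
  have hinj : Function.Injective (MvPolynomial.map (σ := Fin n) (algebraMap k K)) :=
    MvPolynomial.map_injective _ (algebraMap k K).injective
  have hne : ∀ j, linForm (L j) ≠ 0 := by
    have : ∏ j, linForm (L j) ≠ 0 := by
      rw [← hL]; exact (map_ne_zero_iff _ hinj).mpr hF.ne_zero
    exact fun j => Finset.prod_ne_zero_iff.mp this j (Finset.mem_univ j)
  set A : Finset (Fin d) := Finset.univ.filter fun j => MvPolynomial.eval w (linForm (L j)) = 0
  set P := ∏ j ∈ A, linForm (L j) with hP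
  set Q := ∏ j ∈ Aᶜ, linForm (L j) with hQ
  have hPQ : P * Q = F.map (algebraMap k K) := by
    rw [hL]; exact Finset.prod_mul_prod_compl _ _
  have hP0 : P ≠ 0 := Finset.prod_ne_zero_iff.mpr fun j _ => hne j
  have hσF : ∀ σ : Gal(K/k), (F.map (algebraMap k K)).map (σ : K →+* K) =
      F.map (algebraMap k K) := by
    intro σ
    rw [MvPolynomial.map_map]
    congr 2
    exact σ.toAlgHom.comp_algebraMap
  have hσdvd : ∀ σ : Gal(K/k), P.map (σ : K →+* K) ∣ P := by
    intro σ
    have hrel : IsRelPrime (P.map (σ : K →+* K)) Q := by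
      rw [hP, map_prod]
      refine IsRelPrime.prod_left fun i hi => IsRelPrime.prod_right fun j hj => ?_
      have hi' : MvPolynomial.eval w (linForm (L i)) = 0 := by simpa [A] using hi
      have hj' : MvPolynomial.eval w (linForm (L j)) ≠ 0 := by simpa [A] using hj
      have hnei : (linForm (L i)).map (σ : K →+* K) ≠ 0 :=
        (map_ne_zero_iff _ (MvPolynomial.map_injective _ (σ : K →+* K).injective)).mpr (hne i)
      have hev : MvPolynomial.eval w ((linForm (L i)).map (σ : K →+* K)) = 0 := by
        rw [eval_linForm] at hi'
        have := congrArg σ hi'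
        rw [map_linForm, eval_linForm]
        simpa [hw] using this
      rw [map_linForm] at hnei hev ⊢
      rw [(irreducible_linForm hnei).isRelPrime_iff_not_dvd]
      rintro ⟨R, hR⟩
      apply hj'
      rw [hR, map_mul, hev, zero_mul]
    refine hrel.dvd_of_dvd_mul_right ?_
    rw [hPQ, ← hσF σ, ← hPQ, map_mul]
    exact dvd_mul_right _ _
  have hσassoc : ∀ σ : Gal(K/k), ∃ c : K, P.map (σ : K →+* K) = C c * P := by
    intro σ
    have h2 : P ∣ P.map (σ : K →+* K) := by
      have := map_dvd (MvPolynomial.map (σ : K →+* K)) (hσdvd σ⁻¹)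
      rw [MvPolynomial.map_map] at this
      convert this
      have : (σ : K →+* K).comp ((σ⁻¹ : Gal(K/k)) : K →+* K) = RingHom.id K := by
        ext x
        exact AlgEquiv.apply_symm_apply σ x
      rw [this, MvPolynomial.map_id]
    obtain ⟨u, hu⟩ := associated_of_dvd_dvd h2 (hσdvd σ)
    obtain ⟨c, -, hc⟩ := MvPolynomial.isUnit_iff_eq_C_of_isReduced.mp u.isUnit
    exact ⟨c, by rw [← hu, mul_comm, hc]⟩
  obtain ⟨m, hm⟩ := MvPolynomial.ne_zero_iff.mp hP0
  set P' := C (P.coeff m)⁻¹ * P with hP'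
  set Q' := C (P.coeff m) * Q with hQ'
  have hPQ' : P' * Q' = F.map (algebraMap k K) := by
    rw [← hPQ, hP', hQ', mul_mul_mul_comm, ← C_mul, inv_mul_cancel₀ hm, C_1, one_mul]
  have hP'0 : P' ≠ 0 := by
    intro h
    rw [h, zero_mul] at hPQ'
    exact hF.ne_zero ((map_eq_zero_iff _ hinj).mp hPQ'.symm)
  have hσP' : ∀ σ : Gal(K/k), P'.map (σ : K →+* K) = P' := by
    intro σ
    obtain ⟨c, hc⟩ := hσassoc σ
    have hcoef : σ (P.coeff m) = c * P.coeff m := by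
      simpa [coeff_map, coeff_C_mul] using congrArg (coeff m) hc
    have hc0 : c ≠ 0 := by
      rintro rfl
      rw [zero_mul] at hcoef
      exact hm (by simpa using hcoef)
    rw [hP', map_mul, hc, map_C, ← mul_assoc, ← C_mul]
    congr 2
    rw [RingHom.coe_coe, map_inv₀, hcoef]
    field_simp
  have hσQ' : ∀ σ : Gal(K/k), Q'.map (σ : K →+* K) = Q' := by
    intro σ
    apply mul_left_cancel₀ hP'0
    rw [hPQ', ← hσF σ, ← hPQ', map_mul (MvPolynomial.map _) P' Q', hσP' σ]
  obtain ⟨P₀, hP₀⟩ := exists_map_eq_of_forall_map_algEquiv_eq hσP'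
  obtain ⟨Q₀, hQ₀⟩ := exists_map_eq_of_forall_map_algEquiv_eq hσQ'
  have hF₀ : F = P₀ * Q₀ := hinj (by rw [map_mul, hP₀, hQ₀, hPQ'])
  rcases hF.isUnit_or_isUnit hF₀ with h | h
  · exfalso
    have h1 : IsUnit (MvPolynomial.eval w P') := by
      rw [← hP₀]
      exact (h.map (MvPolynomial.map (algebraMap k K))).map (MvPolynomial.eval w)
    apply h1.ne_zero
    have h0 : MvPolynomial.eval w (linForm (L j₀)) = 0 := by rw [eval_linForm]; exact h₀
    have h2 : MvPolynomial.eval w P = 0 := by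
      rw [hP, map_prod]
      exact Finset.prod_eq_zero (i := j₀) (by simpa [A] using h0) h0
    rw [hP', map_mul, h2, mul_zero]
  · by_contra hj
    have h1 : IsUnit (MvPolynomial.eval (0 : Fin n → K) Q') := by
      rw [← hQ₀]
      exact (h.map (MvPolynomial.map (algebraMap k K))).map (MvPolynomial.eval 0)
    apply h1.ne_zero
    have h2 : MvPolynomial.eval 0 Q = 0 := by
      rw [hQ, map_prod]
      exact Finset.prod_eq_zero (i := j) (by simpa [A, eval_linForm] using hj)
        (by rw [eval_linForm]; simp)
    rw [hQ', map_mul, h2, mul_zero]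

lemma det_ne_zero_of_discProd_ne_zero {n d : ℕ} {L : Fin d → Fin n → ℂ} (hΔ : discProd L ≠ 0)
    {g : Fin n → Fin d} (hg : StrictMono g) :
    Matrix.det (Matrix.of fun i j => L (g i) j) ≠ 0 := by
  intro h
  apply hΔ
  unfold discProd
  rw [finprod_mem_eq_finite_toFinset_prod _ (Set.toFinite _)]
  exact Finset.prod_eq_zero (i := g) (by simpa using hg) (by simpa using h)

lemma eval_decomp {n d : ℕ} {F : MvPolynomial (Fin n) ℤ} {L : Fin d → Fin n → ℂ}
    (hF : IsDecomp F L) (v : Fin n → ℤ) :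
    ((MvPolynomial.eval v F : ℤ) : ℂ) = ∏ j, ∑ i, L j i * (v i : ℂ) := by
  have h := congrArg (MvPolynomial.eval fun i => (v i : ℂ)) hF.2
  rw [map_prod, MvPolynomial.eval_map] at h
  simp only [eval_linForm] at h
  rw [← h]
  simpa [Function.comp_def] using MvPolynomial.map_eval (Int.castRingHom ℂ) v F

/-- An irreducible decomposable form of non-zero discriminant has no non-trivial integral zero. -/
lemma eval_ne_zero_of_irreducible {n d : ℕ} (hd : n ≤ d)
    {F : MvPolynomial (Fin n) ℤ} {L : Fin d → Fin n → ℂ}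
    (hF : IsDecomp F L) (hirr : Irreducible (F.map (Int.castRingHom ℚ)))
    (hΔ : discProd L ≠ 0) {v : Fin n → ℤ} (hv : v ≠ 0) : MvPolynomial.eval v F ≠ 0 := by
  intro h0
  have hprod := eval_decomp hF v
  rw [h0, Int.cast_zero, eq_comm, Finset.prod_eq_zero_iff] at hprod
  obtain ⟨j₀, -, hj₀⟩ := hprod
  let K := algebraicClosure ℚ ℂ
  have : IsAlgClosure ℚ K := algebraicClosure.isAlgClosure ℚ ℂ
  have : IsGalois ℚ K := IsAlgClosure.isGalois ℚ K
  have hmem : ∀ j i, L j i ∈ K := fun j i =>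
    mem_algebraicClosure_iff.mpr ((hF.1 j i).tower_top.isAlgebraic)
  let L' : Fin d → Fin n → K := fun j i => ⟨L j i, hmem j i⟩
  have hL' : (F.map (Int.castRingHom ℚ)).map (algebraMap ℚ K) = ∏ j, linForm (L' j) := by
    apply MvPolynomial.map_injective (algebraMap K ℂ) (algebraMap K ℂ).injective
    rw [map_prod, MvPolynomial.map_map, MvPolynomial.map_map]
    simp only [map_linForm]
    rw [RingHom.ext_int (((algebraMap K ℂ).comp (algebraMap ℚ K)).comp (Int.castRingHom ℚ))
      (Int.castRingHom ℂ), hF.2]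
    rfl
  have hall : ∀ j, ∑ i, L j i * (v i : ℂ) = 0 := by
    intro j
    have := forall_eval_eq_zero_of_irreducible (K := K) hirr hL' (fun i => (v i : ℚ)) (j₀ := j₀)
      (by
        apply (algebraMap K ℂ).injective
        rw [map_zero, ← hj₀, map_sum]
        simp [L']) j
    have := congrArg (algebraMap K ℂ) this
    rw [map_zero, map_sum] at this
    rw [← this]
    simp [L']
  have hdet := det_ne_zero_of_discProd_ne_zero hΔ (Fin.strictMono_castLE hd)
  have hz := Matrix.eq_zero_of_mulVec_eq_zero hdet (v := fun i => (v i : ℂ)) (by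
    ext i
    simpa [Matrix.mulVec, dotProduct] using hall (Fin.castLE hd i))
  exact hv (funext fun i => by simpa using congrFun hz i)

end NonVanishing

section ExponentialSum

lemma card_hyperplane_le {n p : ℕ} [Fact p.Prime] (c : Fin n → ZMod p) {i₀ : Fin n}
    (hc : c i₀ ≠ 0) : Nat.card {a : Fin n → ZMod p | ∑ m, c m * a m = 0} ≤ p ^ (n - 1) := by
  classical
  have hinj : Function.Injective (fun (a : {a : Fin n → ZMod p | ∑ m, c m * a m = 0})
      (j : {j : Fin n // j ≠ i₀}) => a.1 j) := by
    rintro ⟨a, ha⟩ ⟨b, hb⟩ hab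
    have hne : ∀ j, j ≠ i₀ → a j = b j := fun j hj => congrFun hab ⟨j, hj⟩
    have h0 : c i₀ * a i₀ = c i₀ * b i₀ := by
      simp only [Set.mem_ofPred_eq] at ha hb
      rw [← Finset.add_sum_erase _ _ (Finset.mem_univ i₀)] at ha hb
      rw [Finset.sum_congr rfl fun j hj => by rw [hne j (Finset.ne_of_mem_erase hj)]] at ha
      exact add_right_cancel (ha.trans hb.symm)
    ext j
    rcases eq_or_ne j i₀ with rfl | hj
    · exact mul_left_cancel₀ hc h0
    · exact hne j hj
  refine (Nat.card_le_card_of_injective _ hinj).trans ?_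
  simp

/-- Orthogonality on a hyperplane: the sum is non-zero only if `t` is proportional to `c`. -/
lemma norm_sum_hyperplane_le {n p : ℕ} [Fact p.Prime] (c : Fin n → ZMod p) (t : Fin n → ℤ)
    {i₀ : Fin n} (hc : c i₀ ≠ 0) [Decidable (∀ j, c i₀ * (t j : ZMod p) = c j * t i₀)] :
    ‖∑ᶠ a ∈ {a : Fin n → ZMod p | ∑ m, c m * a m = 0},
      Complex.exp ((2 * Real.pi * Complex.I) *
        (∑ m, ((a m).val : ℂ) * (t m : ℂ)) / (p : ℂ))‖ ≤
      if ∀ j, c i₀ * (t j : ZMod p) = c j * t i₀ then (p : ℝ) ^ (n - 1) else 0 := by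
  classical
  let φ : (Fin n → ZMod p) → (Fin n → ZMod p) →+ ZMod p := fun b =>
    { toFun := fun a => ∑ m, b m * a m
      map_zero' := by simp
      map_add' := fun x y => by simp [mul_add, Finset.sum_add_distrib] }
  let s : Fin n → ZMod p := fun j => t j
  let ψ : AddChar (φ c).ker ℂ :=
    (ZMod.stdAddChar (N := p)).compAddMonoidHom ((φ s).comp (φ c).ker.subtype)
  have hψ : ∀ a : (φ c).ker, Complex.exp ((2 * Real.pi * Complex.I) *
        (∑ m, ((a.1 m).val : ℂ) * (t m : ℂ)) / (p : ℂ)) = ψ a := by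
    intro a
    have h1 : (φ s) a.1 = ((∑ m, ((a.1 m).val : ℤ) * t m : ℤ) : ZMod p) := by
      simp [φ, s, mul_comm]
    change _ = ZMod.stdAddChar ((φ s) a.1)
    rw [h1, ZMod.stdAddChar_coe]
    push_cast
    rfl
  have hsum : ∑ᶠ a ∈ {a : Fin n → ZMod p | ∑ m, c m * a m = 0},
      Complex.exp ((2 * Real.pi * Complex.I) *
        (∑ m, ((a m).val : ℂ) * (t m : ℂ)) / (p : ℂ)) = ∑ a, ψ a := by
    rw [← finsum_eq_sum_of_fintype, ← finsum_congr hψ]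
    exact (finsum_set_coe_eq_finsum_mem {a : Fin n → ZMod p | ∑ m, c m * a m = 0}).symm
  rw [hsum, AddChar.sum_eq_ite]
  split_ifs with h1 h2 h2
  · rw [← Nat.card_eq_fintype_card, Complex.norm_natCast]
    exact_mod_cast card_hyperplane_le c hc
  · exfalso
    push Not at h2
    obtain ⟨j, hj⟩ := h2
    have hmem : Pi.single j (c i₀) - Pi.single i₀ (c j) ∈ (φ c).ker := by
      rw [AddMonoidHom.mem_ker, map_sub]
      simp [φ, Pi.single_apply, mul_comm]
    have h3 : ψ ⟨_, hmem⟩ = 1 := by rw [h1]; rfl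
    have h4 : (φ s) (Pi.single j (c i₀) - Pi.single i₀ (c j)) = 0 :=
      ZMod.injective_stdAddChar (h3.trans (AddChar.map_zero_eq_one _).symm)
    rw [map_sub, sub_eq_zero] at h4
    apply hj
    simpa [φ, s, Pi.single_apply, mul_comm] using h4
  · simp only [norm_zero]; positivity
  · simp

/-- `t` is proportional modulo `p` to `c`, the coefficient at `i₀` serving as pivot. -/
def ParallelMod {n : ℕ} (p : ℕ) (hp : p.Prime) (i₀ : Fin n) (c : Fin n → @PadicInt p ⟨hp⟩)
    (t : Fin n → ℤ) : Prop :=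
  ∀ j, (@PadicInt.toZMod p ⟨hp⟩) (c i₀) * (t j : ZMod p) = (@PadicInt.toZMod p ⟨hp⟩) (c j) * t i₀

open Classical in
lemma norm_Ssum_le {n p : ℕ} (hp : p.Prime) {τ : ℕ} {𝓛 : Fin τ → Fin n → @PadicInt p ⟨hp⟩}
    {i₀ : Fin n} (h : ∀ i, (@PadicInt.toZMod p ⟨hp⟩) (𝓛 i i₀) ≠ 0) (t : Fin n → ℤ) :
    ‖Ssum p hp 𝓛 t‖ ≤
      (p : ℝ) ^ (n - 1) * (Finset.univ.filter fun i => ParallelMod p hp i₀ (𝓛 i) t).card := by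
  have : Fact p.Prime := ⟨hp⟩
  refine (norm_sum_le _ _).trans ?_
  refine (Finset.sum_le_sum fun i _ =>
    norm_sum_hyperplane_le (fun m => PadicInt.toZMod (𝓛 i m)) t (h i)).trans ?_
  rw [← Finset.sum_filter, Finset.sum_const, nsmul_eq_mul, mul_comm]
  unfold ParallelMod
  exact le_of_eq (by congr!)

variable {n : ℕ} {F : MvPolynomial (Fin n) ℤ} {p : ℕ} {hp : p.Prime} {τ : ℕ}
  {𝓛 : Fin τ → Fin n → @PadicInt p ⟨hp⟩} {Fstar : MvPolynomial (Fin n) (@PadicInt p ⟨hp⟩)}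

lemma IsPadicFact.dvd_eval (h : IsPadicFact F p hp 𝓛 Fstar) {v : Fin n → ℤ} {i : Fin τ}
    (hi : ∑ m, (@PadicInt.toZMod p ⟨hp⟩) (𝓛 i m) * (v m : ZMod p) = 0) :
    (p : ℤ) ∣ MvPolynomial.eval v F := by
  have : Fact p.Prime := ⟨hp⟩
  rw [← ZMod.intCast_zmod_eq_zero_iff_dvd]
  have h1 := congrArg (fun P => MvPolynomial.eval (fun m => (v m : ZMod p))
    (P.map (PadicInt.toZMod (p := p)))) h.1
  simp only [MvPolynomial.map_map, map_mul, map_prod, map_linForm, eval_linForm] at h1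
  rw [Finset.prod_eq_zero (Finset.mem_univ i) hi, mul_zero,
    RingHom.ext_int (RingHom.comp _ _) (Int.castRingHom (ZMod p)), MvPolynomial.eval_map] at h1
  rw [← h1]
  simpa [Function.comp_def] using MvPolynomial.map_eval (Int.castRingHom (ZMod p)) v F

lemma IsPadicFact.coeff_ne_zero (h : IsPadicFact F p hp 𝓛 Fstar) {i₀ : Fin n}
    (hF : ¬ (p : ℤ) ∣ MvPolynomial.eval (Pi.single i₀ 1) F) (i : Fin τ) :
    (@PadicInt.toZMod p ⟨hp⟩) (𝓛 i i₀) ≠ 0 := by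
  intro h0
  exact hF (h.dvd_eval (i := i) (by simpa [Pi.single_apply] using h0))

lemma ParallelMod.dvd_eval (h : IsPadicFact F p hp 𝓛 Fstar) {i₀ i₁ : Fin n}
    {t : Fin n → ℤ} {i : Fin τ} (hi : ParallelMod p hp i₀ (𝓛 i) t) :
    (p : ℤ) ∣ MvPolynomial.eval (Pi.single i₀ (t i₁) - Pi.single i₁ (t i₀)) F := by
  refine h.dvd_eval (i := i) ?_
  have := hi i₁
  simpa [Pi.single_apply, mul_sub, sub_eq_zero] using this

lemma ParallelMod.dvd_sub {i₀ : Fin n} {c : Fin n → @PadicInt p ⟨hp⟩}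
    (hc : (@PadicInt.toZMod p ⟨hp⟩) (c i₀) ≠ 0) {t t' : Fin n → ℤ}
    (ht : ParallelMod p hp i₀ c t) (ht' : ParallelMod p hp i₀ c t') (h₀ : t i₀ = t' i₀)
    (j : Fin n) : (p : ℤ) ∣ t j - t' j := by
  have : Fact p.Prime := ⟨hp⟩
  rw [← ZMod.intCast_zmod_eq_zero_iff_dvd, Int.cast_sub, sub_eq_zero]
  exact mul_left_cancel₀ hc (by rw [ht j, ht' j, h₀])

lemma IsPadicFact.card_le {d : ℕ} {L : Fin d → Fin n → ℂ} (hF : IsDecomp F L) (hF0 : F ≠ 0)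
    (h : IsPadicFact F p hp 𝓛 Fstar) : τ ≤ d := by
  have : Fact p.Prime := ⟨hp⟩
  have hne : F.map (Int.castRingHom ℤ_[p]) ≠ 0 :=
    (map_ne_zero_iff _ (MvPolynomial.map_injective _ (RingHom.injective_int _))).mpr hF0
  rw [h.1] at hne
  have hprod := right_ne_zero_of_mul hne
  have h1 : (∏ i, linForm (𝓛 i)).totalDegree = τ := by
    simpa using (IsHomogeneous.prod Finset.univ _ (fun _ => 1)
      fun i _ => linForm_isHomogeneous (𝓛 i)).totalDegree hprod
  have h2 : (F.map (Int.castRingHom ℂ)).totalDegree ≤ d := by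
    rw [hF.2]
    simpa using (IsHomogeneous.prod Finset.univ _ (fun _ => 1)
      fun i _ => linForm_isHomogeneous (L i)).totalDegree_le
  have h3 : (F.map (Int.castRingHom ℂ)).totalDegree = F.totalDegree := by
    unfold MvPolynomial.totalDegree
    rw [MvPolynomial.support_map_of_injective _ (RingHom.injective_int _)]
  calc τ ≤ Fstar.totalDegree + (∏ i, linForm (𝓛 i)).totalDegree := by omega
    _ = (F.map (Int.castRingHom ℤ_[p])).totalDegree := by
      rw [h.1, totalDegree_mul_of_isDomain (left_ne_zero_of_mul hne) hprod]
    _ ≤ F.totalDegree := Finset.sup_mono (MvPolynomial.support_map_subset _ _)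
    _ ≤ d := h3 ▸ h2

end ExponentialSum

section Counting

/-- The integers of absolute value at most `Y`. -/
def intBox (Y : ℝ) : Finset ℤ := Finset.Icc (-⌊Y⌋) ⌊Y⌋

lemma mem_intBox {Y : ℝ} {x : ℤ} : x ∈ intBox Y ↔ |(x : ℝ)| ≤ Y := by
  rw [intBox, Finset.mem_Icc, ← abs_le, Int.le_floor, Int.cast_abs]

lemma card_intBox_le {Y : ℝ} (hY : 1 ≤ Y) : ((intBox Y).card : ℝ) ≤ 3 * Y := by
  have h1 : (1 : ℤ) ≤ ⌊Y⌋ := Int.le_floor.mpr (by simpa using hY)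
  have h2 : ((intBox Y).card : ℤ) = 2 * ⌊Y⌋ + 1 := by
    rw [intBox, Int.card_Icc, Int.toNat_of_nonneg (by linarith)]
    ring
  have h3 : ((intBox Y).card : ℝ) = 2 * (⌊Y⌋ : ℝ) + 1 := by exact_mod_cast h2
  have := Int.floor_le Y
  linarith

lemma intCast_dvd_of_forall_primeFactors {u : ℕ} (hu : Squarefree u) {x : ℤ}
    (h : ∀ p ∈ u.primeFactors, (p : ℤ) ∣ x) : (u : ℤ) ∣ x := by
  rw [Int.natCast_dvd, ← Nat.prod_primeFactors_of_squarefree hu]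
  refine Finset.prod_primes_dvd _ (fun p hp => (Nat.prime_of_mem_primeFactors hp).prime) ?_
  exact fun p hp => Int.natCast_dvd.mp (h p hp)

lemma eq_zero_of_dvd_of_abs_lt {u : ℕ} {x : ℤ} (h : (u : ℤ) ∣ x) (hx : |(x : ℝ)| < u) : x = 0 :=
  Int.eq_zero_of_abs_lt_dvd h (by exact_mod_cast hx)

/-- The pairs in the box of side `Y` at whose rotated point `F` is divisible by `u`. -/
def rootPairs {n : ℕ} (F : MvPolynomial (Fin n) ℤ) (i₀ i₁ : Fin n) (Y : ℝ) (u : ℕ) :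
    Finset (ℤ × ℤ) :=
  (intBox Y ×ˢ intBox Y).filter fun q =>
    q ≠ 0 ∧ (u : ℤ) ∣ MvPolynomial.eval (Pi.single i₀ q.2 - Pi.single i₁ q.1) F

lemma rootPairs_mono {n : ℕ} (F : MvPolynomial (Fin n) ℤ) (i₀ i₁ : Fin n) {Y Y' : ℝ}
    (h : Y ≤ Y') (u : ℕ) : rootPairs F i₀ i₁ Y u ⊆ rootPairs F i₀ i₁ Y' u := by
  refine Finset.filter_subset_filter _ (Finset.product_subset_product ?_ ?_) <;>
    exact fun x hx => mem_intBox.mpr ((mem_intBox.mp hx).trans h)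

variable {n : ℕ} {F : MvPolynomial (Fin n) ℤ} {τ : ∀ p : ℕ, p.Prime → ℕ}
  {𝓛 : ∀ (p : ℕ) (hp : p.Prime), Fin (τ p hp) → Fin n → @PadicInt p ⟨hp⟩}
  {Fstar : ∀ (p : ℕ) (hp : p.Prime), MvPolynomial (Fin n) (@PadicInt p ⟨hp⟩)}

open Classical in
lemma card_parallel_le (hfact : ∀ (p : ℕ) (hp : p.Prime), IsPadicFact F p hp (𝓛 p hp) (Fstar p hp))
    {u : ℕ} (hu : Squarefree u) {i₀ : Fin n} (i₁ : Fin n)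
    (hc : ∀ (p : ℕ) (hp : p.Prime), p ∣ u → ∀ i, (@PadicInt.toZMod p ⟨hp⟩) (𝓛 p hp i i₀) ≠ 0)
    {Y : ℝ} (hY : 2 * Y < u)
    (f : ∀ p : u.primeFactors, Fin (τ p.1 (Nat.prime_of_mem_primeFactors p.2))) :
    (((Fintype.piFinset fun _ : Fin n => intBox Y).filter (· ≠ 0)).filter fun t =>
      ∀ p : u.primeFactors, ParallelMod p.1 (Nat.prime_of_mem_primeFactors p.2) i₀
        (𝓛 p.1 (Nat.prime_of_mem_primeFactors p.2) (f p)) t).card ≤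
      (rootPairs F i₀ i₁ Y u).card := by
  have key : ∀ t t' : Fin n → ℤ, (∀ i, |(t i : ℝ)| ≤ Y) → (∀ i, |(t' i : ℝ)| ≤ Y) →
      (∀ p : u.primeFactors, ParallelMod p.1 (Nat.prime_of_mem_primeFactors p.2) i₀
        (𝓛 p.1 (Nat.prime_of_mem_primeFactors p.2) (f p)) t) →
      (∀ p : u.primeFactors, ParallelMod p.1 (Nat.prime_of_mem_primeFactors p.2) i₀
        (𝓛 p.1 (Nat.prime_of_mem_primeFactors p.2) (f p)) t') →
      t i₀ = t' i₀ → t = t' := by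
    intro t t' ht ht' hpar hpar' h₀
    ext j
    rw [← sub_eq_zero]
    refine eq_zero_of_dvd_of_abs_lt (u := u) (intCast_dvd_of_forall_primeFactors hu fun p hp => ?_) ?_
    · exact (hpar ⟨p, hp⟩).dvd_sub (hc p _ (Nat.dvd_of_mem_primeFactors hp) _) (hpar' ⟨p, hp⟩) h₀ j
    · push_cast
      have := abs_sub (t j : ℝ) (t' j : ℝ)
      linarith [ht j, ht' j]
  have hzero : ∀ p : u.primeFactors, ParallelMod p.1 (Nat.prime_of_mem_primeFactors p.2) i₀
        (𝓛 p.1 (Nat.prime_of_mem_primeFactors p.2) (f p)) 0 := by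
    intro p j
    simp
  refine Finset.card_le_card_of_injOn (fun t => (t i₀, t i₁)) ?_ ?_
  · intro t ht
    simp only [Finset.coe_filter, Finset.mem_filter, Fintype.mem_piFinset, mem_intBox,
      Set.mem_ofPred_eq] at ht
    obtain ⟨⟨hbox, ht0⟩, hpar⟩ := ht
    simp only [rootPairs, Finset.coe_filter, Set.mem_ofPred_eq, Finset.mem_product, mem_intBox]
    refine ⟨⟨hbox i₀, hbox i₁⟩, fun h => ht0 ?_, ?_⟩
    · refine key t 0 hbox (fun i => ?_) hpar hzero (congrArg Prod.fst h)
      simpa using (abs_nonneg _).trans (hbox i₀)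
    · exact intCast_dvd_of_forall_primeFactors hu fun p hp =>
        (hpar ⟨p, hp⟩).dvd_eval (hfact p _)
  · intro t ht t' ht' htt'
    simp only [Finset.coe_filter, Finset.mem_filter, Fintype.mem_piFinset, mem_intBox,
      Set.mem_ofPred_eq] at ht ht'
    exact key t t' ht.1.1 ht'.1.1 ht.2 ht'.2 (congrArg Prod.fst htt')

lemma Ssumbox_le (hfact : ∀ (p : ℕ) (hp : p.Prime), IsPadicFact F p hp (𝓛 p hp) (Fstar p hp))
    {d u : ℕ} (hτ : ∀ (p : ℕ) (hp : p.Prime), τ p hp ≤ d) (hu : Squarefree u) {i₀ : Fin n}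
    (i₁ : Fin n)
    (hc : ∀ (p : ℕ) (hp : p.Prime), p ∣ u → ∀ i, (@PadicInt.toZMod p ⟨hp⟩) (𝓛 p hp i i₀) ≠ 0)
    {Y : ℝ} (hY : 2 * Y < u) :
    Ssumbox 𝓛 u Y ≤
      (u : ℝ) ^ (n - 1) * (d ^ u.primeFactors.card * (rootPairs F i₀ i₁ Y u).card : ℕ) := by
  classical
  set T := (Fintype.piFinset fun _ : Fin n => intBox Y).filter (· ≠ 0) with hT
  set par : ∀ p : u.primeFactors, Fin (τ p.1 (Nat.prime_of_mem_primeFactors p.2)) →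
      (Fin n → ℤ) → Prop := fun p i t => ParallelMod p.1 (Nat.prime_of_mem_primeFactors p.2) i₀
        (𝓛 p.1 (Nat.prime_of_mem_primeFactors p.2) i) t with hpar
  have hset : {t : Fin n → ℤ | t ≠ 0 ∧ ∀ i, |(t i : ℝ)| ≤ Y} = (T : Set (Fin n → ℤ)) := by
    ext t
    simp [hT, mem_intBox, and_comm]
  have hprod : ∏ p ∈ u.primeFactors.attach, (p.1 : ℝ) = u := by
    rw [Finset.prod_attach u.primeFactors (fun p : ℕ => (p : ℝ)), ← Nat.cast_prod,
      Nat.prod_primeFactors_of_squarefree hu]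
  have hS : ∀ t, SabsSF 𝓛 u t ≤ (u : ℝ) ^ (n - 1) *
      ((Finset.univ.filter fun f : (∀ p : u.primeFactors,
        Fin (τ p.1 (Nat.prime_of_mem_primeFactors p.2))) => ∀ p, par p (f p) t).card : ℕ) := by
    intro t
    have hcard : (Finset.univ.filter fun f : (∀ p : u.primeFactors,
        Fin (τ p.1 (Nat.prime_of_mem_primeFactors p.2))) => ∀ p, par p (f p) t) =
        Fintype.piFinset fun p => Finset.univ.filter fun i => par p i t := by
      ext f
      simp
    rw [hcard, Fintype.card_piFinset, Finset.univ_eq_attach, Nat.cast_prod, ← hprod,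
      ← Finset.prod_pow, ← Finset.prod_mul_distrib]
    refine Finset.prod_le_prod (fun _ _ => norm_nonneg _) fun p _ => ?_
    exact norm_Ssum_le _ (hc p.1 _ (Nat.dvd_of_mem_primeFactors p.2)) t
  rw [Ssumbox, hset, finsum_mem_coe_finset]
  refine (Finset.sum_le_sum fun t _ => hS t).trans ?_
  rw [← Finset.mul_sum]
  refine mul_le_mul_of_nonneg_left ?_ (by positivity)
  rw [← Nat.cast_sum, Nat.cast_le]
  have hswap := Finset.sum_card_bipartiteAbove_eq_sum_card_bipartiteBelow
    (s := T) (t := (Finset.univ : Finset (∀ p : u.primeFactors,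
        Fin (τ p.1 (Nat.prime_of_mem_primeFactors p.2))))) (fun t f => ∀ p, par p (f p) t)
  refine (hswap.trans_le (Finset.sum_le_card_nsmul _ _ _ fun f _ =>
    card_parallel_le hfact hu i₁ hc hY f)).trans ?_
  rw [smul_eq_mul]
  refine Nat.mul_le_mul_right _ ?_
  rw [Finset.card_univ, Fintype.card_pi, Finset.univ_eq_attach]
  simp only [Fintype.card_fin]
  exact (Finset.prod_le_pow_card _ _ _ fun p _ => hτ _ _).trans (by simp)

end Counting

section DivisorBound

lemma exists_pow_card_primeFactors_le (K : ℕ) {ε : ℝ} (hε : 0 < ε) :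
    ∃ A : ℝ, 0 < A ∧ ∀ m : ℕ, m ≠ 0 → (K : ℝ) ^ m.primeFactors.card ≤ A * (m : ℝ) ^ ε := by
  set N : ℕ := ⌈((K : ℝ) + 1) ^ (1 / ε)⌉₊ with hN
  have hK1 : (1 : ℝ) ≤ (K : ℝ) + 1 := by linarith [Nat.cast_nonneg (α := ℝ) K]
  refine ⟨((K : ℝ) + 1) ^ N, by positivity, fun m hm => ?_⟩
  have hlarge : ∀ p : ℕ, N ≤ p → (K : ℝ) ≤ (p : ℝ) ^ ε := by
    intro p hp
    have h1 : ((K : ℝ) + 1) ^ (1 / ε) ≤ p := (Nat.le_ceil _).trans (Nat.cast_le.mpr hp)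
    have h2 := Real.rpow_le_rpow (by positivity) h1 hε.le
    rw [← Real.rpow_mul (by positivity), one_div_mul_cancel hε.ne', Real.rpow_one] at h2
    linarith
  rw [← Finset.prod_const]
  rw [← Finset.prod_filter_mul_prod_filter_not m.primeFactors (fun p => p < N)]
  refine mul_le_mul ?_ ?_ (by positivity) (by positivity)
  · rw [Finset.prod_const]
    refine (pow_le_pow_left₀ (by positivity) (by linarith : (K : ℝ) ≤ K + 1) _).trans
      (pow_le_pow_right₀ hK1 ?_)
    refine (Finset.card_le_card (t := Finset.range N) fun p hp => ?_).trans (by simp)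
    simpa using (Finset.mem_filter.mp hp).2
  · calc ∏ p ∈ m.primeFactors.filter (fun p => ¬ p < N), (K : ℝ)
        ≤ ∏ p ∈ m.primeFactors.filter (fun p => ¬ p < N), (p : ℝ) ^ ε :=
          Finset.prod_le_prod (fun _ _ => by positivity) fun p hp =>
            hlarge p (not_lt.mp (Finset.mem_filter.mp hp).2)
      _ = ((∏ p ∈ m.primeFactors.filter (fun p => ¬ p < N), p : ℕ) : ℝ) ^ ε := by
          rw [Nat.cast_prod, Real.finsetProd_rpow _ _ (fun _ _ => by positivity)]
      _ ≤ (m : ℝ) ^ ε := by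
          refine Real.rpow_le_rpow (by positivity) ?_ hε.le
          rw [Nat.cast_le]
          refine Nat.le_of_dvd (Nat.pos_of_ne_zero hm) ?_
          exact (Finset.prod_dvd_prod_of_subset _ _ _ (Finset.filter_subset _ _)).trans
            (Nat.prod_primeFactors_dvd m)

lemma sum_pow_card_primeFactors_le {S : Finset ℕ} {m d : ℕ} (hm : m ≠ 0) (hd : 1 ≤ d)
    (hsq : ∀ u ∈ S, Squarefree u) (hdvd : ∀ u ∈ S, u ∣ m) :
    ∑ u ∈ S, d ^ u.primeFactors.card ≤ (2 * d) ^ m.primeFactors.card := by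
  have hcard : S.card ≤ 2 ^ m.primeFactors.card := by
    rw [← Finset.card_powerset]
    refine Finset.card_le_card_of_injOn Nat.primeFactors (fun u hu => ?_) fun u hu v hv huv => ?_
    · simpa using Nat.primeFactors_mono (hdvd u hu) hm
    · rw [← Nat.prod_primeFactors_of_squarefree (hsq u hu), huv,
        Nat.prod_primeFactors_of_squarefree (hsq v hv)]
  rw [mul_pow]
  refine (Finset.sum_le_card_nsmul _ _ (d ^ m.primeFactors.card) fun u hu => ?_).trans ?_
  · exact Nat.pow_le_pow_right hd (Finset.card_le_card (Nat.primeFactors_mono (hdvd u hu) hm))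
  · exact Nat.mul_le_mul_right _ hcard

lemma exists_abs_eval_le {n d : ℕ} {F : MvPolynomial (Fin n) ℤ} {L : Fin d → Fin n → ℂ}
    (hF : IsDecomp F L) : ∃ M : ℝ, 0 < M ∧ ∀ (v : Fin n → ℤ) (Y : ℝ), 0 ≤ Y → (∀ i, |(v i : ℝ)| ≤ Y) →
      |((MvPolynomial.eval v F : ℤ) : ℝ)| ≤ M * Y ^ d := by
  refine ⟨∏ j, (∑ i, ‖L j i‖ + 1), Finset.prod_pos fun j _ => by positivity, fun v Y hY hv => ?_⟩
  have h1 : |((MvPolynomial.eval v F : ℤ) : ℝ)| = ‖((MvPolynomial.eval v F : ℤ) : ℂ)‖ := by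
    rw [Complex.norm_intCast]
  rw [h1, eval_decomp hF, norm_prod]
  have h2 : ∏ j : Fin d, (∑ i, ‖L j i‖ + 1) * Y = (∏ j, (∑ i, ‖L j i‖ + 1)) * Y ^ d := by
    rw [Finset.prod_mul_distrib]; simp
  rw [← h2]
  refine Finset.prod_le_prod (fun _ _ => norm_nonneg _) fun j _ => ?_
  calc ‖∑ i, L j i * (v i : ℂ)‖ ≤ ∑ i, ‖L j i * (v i : ℂ)‖ := norm_sum_le _ _
    _ ≤ ∑ i, ‖L j i‖ * Y := Finset.sum_le_sum fun i _ => by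
        rw [norm_mul, Complex.norm_intCast]
        exact mul_le_mul_of_nonneg_left (hv i) (norm_nonneg _)
    _ = (∑ i, ‖L j i‖) * Y := (Finset.sum_mul _ _ _).symm
    _ ≤ (∑ i, ‖L j i‖ + 1) * Y := by gcongr; linarith

end DivisorBound

section Averaging

lemma exists_sum_card_rootPairs_le {n d : ℕ} (hd : 1 ≤ d) {F : MvPolynomial (Fin n) ℤ}
    {L : Fin d → Fin n → ℂ} (hF : IsDecomp F L)
    (hne : ∀ v : Fin n → ℤ, v ≠ 0 → MvPolynomial.eval v F ≠ 0) {i₀ i₁ : Fin n} (hi : i₀ ≠ i₁) :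
    ∃ A : ℝ, 0 < A ∧ ∀ (S : Finset ℕ) (Y : ℝ), (∀ u ∈ S, Squarefree u) → 1 ≤ Y →
      ((∑ u ∈ S, d ^ u.primeFactors.card * (rootPairs F i₀ i₁ Y u).card : ℕ) : ℝ) ≤
        A * Y ^ 2 * Y ^ ((1 : ℝ) / 10) := by
  classical
  have hd0 : (0 : ℝ) < d := by exact_mod_cast hd
  obtain ⟨M, hM, hMF⟩ := exists_abs_eval_le hF
  obtain ⟨A, hA, hAm⟩ := exists_pow_card_primeFactors_le (2 * d) (ε := 1 / (10 * d)) (by positivity)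
  refine ⟨9 * (A * M ^ ((1 : ℝ) / (10 * d))), by positivity, fun S Y hsq hY => ?_⟩
  have hY0 : 0 ≤ Y := by linarith
  set G : ℤ × ℤ → ℤ := fun q => MvPolynomial.eval (Pi.single i₀ q.2 - Pi.single i₁ q.1) F with hG
  have hG0 : ∀ q, q ≠ 0 → G q ≠ 0 := by
    intro q hq
    refine hne _ fun h => hq ?_
    have h1 := congrFun h i₀
    have h2 := congrFun h i₁
    simp only [Pi.sub_apply, Pi.single_eq_same, Pi.single_eq_of_ne hi, Pi.single_eq_of_ne hi.symm,
      Pi.zero_apply] at h1 h2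
    exact Prod.ext (by simpa using h2) (by simpa using h1)
  set X := (intBox Y ×ˢ intBox Y).filter (· ≠ 0) with hX
  have hswap : ∑ u ∈ S, d ^ u.primeFactors.card * (rootPairs F i₀ i₁ Y u).card =
      ∑ q ∈ X, ∑ u ∈ S.filter (fun u : ℕ => (u : ℤ) ∣ G q), d ^ u.primeFactors.card := by
    simp_rw [Finset.sum_filter (s := S)]
    rw [Finset.sum_comm]
    refine Finset.sum_congr rfl fun u _ => ?_
    rw [← Finset.sum_filter, Finset.sum_const, smul_eq_mul, mul_comm, hX, Finset.filter_filter]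
    rfl
  rw [hswap, Nat.cast_sum]
  have hterm : ∀ q ∈ X, ((∑ u ∈ S.filter (fun u : ℕ => (u : ℤ) ∣ G q),
      d ^ u.primeFactors.card : ℕ) : ℝ) ≤ A * M ^ ((1 : ℝ) / (10 * d)) * Y ^ ((1 : ℝ) / 10) := by
    intro q hq
    obtain ⟨hqbox, hq0⟩ := Finset.mem_filter.mp hq
    rw [Finset.mem_product, mem_intBox, mem_intBox] at hqbox
    have hm : (G q).natAbs ≠ 0 := Int.natAbs_ne_zero.mpr (hG0 q hq0)
    have h1 := sum_pow_card_primeFactors_le (S := S.filter (fun u : ℕ => (u : ℤ) ∣ G q)) hm hd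
      (fun u hu => hsq u (Finset.mem_filter.mp hu).1)
      (fun u hu => Int.natCast_dvd.mp (Finset.mem_filter.mp hu).2)
    have h2 : (((G q).natAbs : ℕ) : ℝ) ≤ M * Y ^ d := by
      rw [Nat.cast_natAbs, Int.cast_abs]
      refine hMF _ Y hY0 fun i => ?_
      rcases eq_or_ne i i₀ with rfl | h0
      · simpa [Pi.single_eq_of_ne hi] using hqbox.2
      · rcases eq_or_ne i i₁ with rfl | h1
        · simpa [Pi.single_eq_of_ne h0] using hqbox.1
        · simpa [Pi.single_eq_of_ne h0, Pi.single_eq_of_ne h1] using hY0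
    calc ((∑ u ∈ S.filter (fun u : ℕ => (u : ℤ) ∣ G q), d ^ u.primeFactors.card : ℕ) : ℝ)
        ≤ ((2 * d : ℕ) : ℝ) ^ (G q).natAbs.primeFactors.card := by exact_mod_cast h1
      _ ≤ A * ((G q).natAbs : ℝ) ^ ((1 : ℝ) / (10 * d)) := hAm _ hm
      _ ≤ A * (M * Y ^ d) ^ ((1 : ℝ) / (10 * d)) := by gcongr
      _ = A * M ^ ((1 : ℝ) / (10 * d)) * Y ^ ((1 : ℝ) / 10) := by
        rw [Real.mul_rpow hM.le (by positivity), ← Real.rpow_natCast, ← Real.rpow_mul hY0, mul_assoc]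
        congr 3
        field_simp
  refine (Finset.sum_le_card_nsmul _ _ _ hterm).trans ?_
  have hXcard : (X.card : ℝ) ≤ 9 * Y ^ 2 := by
    have h1 : X.card ≤ (intBox Y).card * (intBox Y).card := by
      rw [← Finset.card_product]; exact Finset.card_filter_le _ _
    calc (X.card : ℝ) ≤ ((intBox Y).card : ℝ) * (intBox Y).card := by exact_mod_cast h1
      _ ≤ (3 * Y) * (3 * Y) := by gcongr <;> exact card_intBox_le hY
      _ = 9 * Y ^ 2 := by ring
  rw [nsmul_eq_mul]
  calc _ ≤ 9 * Y ^ 2 * (A * M ^ ((1 : ℝ) / (10 * d)) * Y ^ ((1 : ℝ) / 10)) := by gcongr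
    _ = _ := by ring

lemma rootPairs_eq_empty {n : ℕ} (F : MvPolynomial (Fin n) ℤ) (i₀ i₁ : Fin n) {Y : ℝ}
    (hY : Y < 1) (u : ℕ) : rootPairs F i₀ i₁ Y u = ∅ := by
  have h0 : ∀ x : ℤ, |(x : ℝ)| ≤ Y → x = 0 := fun x hx =>
    Int.abs_lt_one_iff.mp (by exact_mod_cast hx.trans_lt hY)
  refine Finset.filter_eq_empty_iff.mpr fun q hq h => h.1 ?_
  rw [Finset.mem_product, mem_intBox, mem_intBox] at hq
  exact Prod.ext (h0 _ hq.1) (h0 _ hq.2)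

end Averaging

theorem stmt18 (n d k : ℕ) (hn : 2 ≤ n) (hd : n < d) (hk : 2 ≤ k)
    (F : MvPolynomial (Fin n) ℤ) (L : Fin d → Fin n → ℂ)
    (hF : IsDecomp F L) (hirr : Irreducible (F.map (Int.castRingHom ℚ)))
    (hΔ : discProd L ≠ 0)
    (ξ₁ : ℝ → ℝ) (hξ : Xi1Good ξ₁) (C₁ : ℝ) (hC₁ : 0 < C₁)
    (τ : ∀ p : ℕ, p.Prime → ℕ)
    (𝓛 : ∀ (p : ℕ) (hp : p.Prime), Fin (τ p hp) → Fin n → @PadicInt p ⟨hp⟩)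
    (Fstar : ∀ (p : ℕ) (hp : p.Prime), MvPolynomial (Fin n) (@PadicInt p ⟨hp⟩))
    (hfact : ∀ (p : ℕ) (hp : p.Prime), IsPadicFact F p hp (𝓛 p hp) (Fstar p hp)) :
    ∃ C₅ C : ℝ, 0 < C₅ ∧ 0 < C ∧ ∃ B₀ : ℝ, ∀ B : ℝ, B₀ ≤ B → ∀ U : ℝ, 1 < U →
      QUgen 𝓛 {u ∈ U2set (ξ₁ B) (xi2 n B) (xi3 C₁ k B) |
          U / 2 < (u : ℝ) ∧ (u : ℝ) ≤ U} B
        ≤ C * U ^ ((9 : ℝ) / 10) * Real.log B ^ C₅ / B ^ ((8 : ℝ) / 5) := by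
  have hne : ∀ v : Fin n → ℤ, v ≠ 0 → MvPolynomial.eval v F ≠ 0 := fun v hv =>
    eval_ne_zero_of_irreducible hd.le hF hirr hΔ hv
  have hF0 : F ≠ 0 := by
    rintro rfl
    exact hirr.ne_zero (map_zero _)
  have hτ : ∀ (p : ℕ) (hp : p.Prime), τ p hp ≤ d := fun p hp => (hfact p hp).card_le hF hF0
  set i₀ : Fin n := ⟨0, by omega⟩
  set i₁ : Fin n := ⟨1, by omega⟩
  have hi : i₀ ≠ i₁ := by simp [i₀, i₁]
  obtain ⟨A, hA, hbound⟩ := exists_sum_card_rootPairs_le (by omega : 1 ≤ d) hF hne hi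
  set E := MvPolynomial.eval (Pi.single i₀ 1) F with hE
  have hE0 : E ≠ 0 := hne _ (by simp)
  obtain ⟨B₁, hB₁⟩ := eventually_atTop.mp (hξ.2.1.eventually_ge_atTop (|E| : ℝ))
  refine ⟨1, 2 * A, one_pos, by positivity, max B₁ 4, fun B hB U hU => ?_⟩
  have hB4 : (4 : ℝ) ≤ B := (le_max_right _ _).trans hB
  have hB0 : 0 < B := by linarith
  have hU0 : 0 < U := by linarith
  have hlog : 1 ≤ Real.log B := by
    rw [Real.le_log_iff_exp_le hB0]
    linarith [Real.exp_one_lt_three]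
  have hB45 : 2 < B ^ ((4 : ℝ) / 5) := by
    calc (2 : ℝ) = 4 ^ ((1 : ℝ) / 2) := by
          rw [show (4 : ℝ) = 2 ^ (2 : ℝ) by norm_num, ← Real.rpow_mul (by norm_num)]; norm_num
      _ < 4 ^ ((4 : ℝ) / 5) := Real.rpow_lt_rpow_of_exponent_lt (by norm_num) (by norm_num)
      _ ≤ B ^ ((4 : ℝ) / 5) := Real.rpow_le_rpow (by norm_num) hB4 (by norm_num)
  set Y := U ^ ((9 : ℝ) / 10) / B ^ ((4 : ℝ) / 5) with hY
  have hY0 : 0 < Y := by positivity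
  have hYU : Y ≤ U := by
    refine (div_le_self (by positivity) (by linarith)).trans ?_
    exact Real.rpow_le_self_of_one_le hU.le (by norm_num)
  set S := {u ∈ U2set (ξ₁ B) (xi2 n B) (xi3 C₁ k B) | U / 2 < (u : ℝ) ∧ (u : ℝ) ≤ U} with hS
  have hfin : S.Finite := (Set.finite_Iic ⌊U⌋₊).subset fun u hu => Nat.le_floor hu.2.2
  have hterm : ∀ u ∈ hfin.toFinset, (1 / (u : ℝ) ^ n) *
      Ssumbox 𝓛 u ((u : ℝ) ^ ((9 : ℝ) / 10) / B ^ ((4 : ℝ) / 5)) ≤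
      2 / U * (d ^ u.primeFactors.card * (rootPairs F i₀ i₁ Y u).card : ℕ) := by
    intro u hu
    obtain ⟨⟨hu0, -, husq, hup⟩, hUu, huU⟩ := hfin.mem_toFinset.mp hu
    have hu1 : (1 : ℝ) ≤ u := by exact_mod_cast hu0
    have hu0' : (0 : ℝ) < u := by linarith
    have hc : ∀ (p : ℕ) (hp : p.Prime), p ∣ u →
        ∀ i, (@PadicInt.toZMod p ⟨hp⟩) (𝓛 p hp i i₀) ≠ 0 := by
      intro p hp hpu
      refine (hfact p hp).coeff_ne_zero fun hdvd => ?_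
      have h1 : |E| < (p : ℤ) := by
        have := (hB₁ B ((le_max_left _ _).trans hB)).trans_lt
          (hup p (Nat.mem_primeFactors.mpr ⟨hp, hpu, hu0.ne'⟩)).1
        exact_mod_cast this
      exact hE0 (Int.eq_zero_of_abs_lt_dvd hdvd h1)
    have hYu : 2 * ((u : ℝ) ^ ((9 : ℝ) / 10) / B ^ ((4 : ℝ) / 5)) < u := by
      have h9 : (u : ℝ) ^ ((9 : ℝ) / 10) ≤ u := Real.rpow_le_self_of_one_le hu1 (by norm_num)
      rw [← mul_div_assoc, div_lt_iff₀ (by positivity)]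
      nlinarith
    have hYle : (u : ℝ) ^ ((9 : ℝ) / 10) / B ^ ((4 : ℝ) / 5) ≤ Y := by
      rw [hY]; gcongr
    have hpow : (u : ℝ) ^ n = u ^ (n - 1) * u := by
      rw [← pow_succ, Nat.sub_add_cancel (by omega)]
    calc _ ≤ (1 / (u : ℝ) ^ n) * ((u : ℝ) ^ (n - 1) * (d ^ u.primeFactors.card *
          (rootPairs F i₀ i₁ ((u : ℝ) ^ ((9 : ℝ) / 10) / B ^ ((4 : ℝ) / 5)) u).card : ℕ)) := by
          gcongr
          exact Ssumbox_le hfact hτ husq i₁ hc hYu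
      _ ≤ (1 / (u : ℝ) ^ n) * ((u : ℝ) ^ (n - 1) * (d ^ u.primeFactors.card *
          (rootPairs F i₀ i₁ Y u).card : ℕ)) := by
          gcongr
          exact rootPairs_mono F i₀ i₁ hYle u
      _ = 1 / u * (d ^ u.primeFactors.card * (rootPairs F i₀ i₁ Y u).card : ℕ) := by
          rw [hpow]
          field_simp
      _ ≤ _ := by
          refine mul_le_mul_of_nonneg_right ?_ (by positivity)
          rw [div_le_div_iff₀ hu0' hU0]
          linarith
  rw [QUgen, finsum_mem_eq_finite_toFinset_sum _ hfin]
  refine (Finset.sum_le_sum hterm).trans ?_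
  rw [← Finset.mul_sum, ← Nat.cast_sum, Real.rpow_one]
  rcases lt_or_ge Y 1 with hY1 | hY1
  · simp only [rootPairs_eq_empty F i₀ i₁ hY1, Finset.card_empty, mul_zero, Finset.sum_const_zero,
      Nat.cast_zero]
    positivity
  · have hYsq : Y ^ 2 = U ^ ((9 : ℝ) / 5) / B ^ ((8 : ℝ) / 5) := by
      rw [hY, div_pow, ← Real.rpow_natCast, ← Real.rpow_natCast, ← Real.rpow_mul hU0.le,
        ← Real.rpow_mul hB0.le]
      norm_num
    have hUpow : U ^ ((9 : ℝ) / 5) * U ^ ((1 : ℝ) / 10) = U ^ ((9 : ℝ) / 10) * U := by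
      rw [← Real.rpow_add hU0, ← Real.rpow_add_one hU0.ne']
      norm_num
    calc _ ≤ 2 / U * (A * Y ^ 2 * Y ^ ((1 : ℝ) / 10)) := by
          gcongr
          exact hbound _ Y (fun u hu => (hfin.mem_toFinset.mp hu).1.2.2.1) hY1
      _ ≤ 2 / U * (A * Y ^ 2 * U ^ ((1 : ℝ) / 10)) := by gcongr
      _ = 2 * A / U * (U ^ ((9 : ℝ) / 5) * U ^ ((1 : ℝ) / 10)) / B ^ ((8 : ℝ) / 5) := by
          rw [hYsq]; ring
      _ = 2 * A * U ^ ((9 : ℝ) / 10) * 1 / B ^ ((8 : ℝ) / 5) := by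
          rw [hUpow]; field_simp
      _ ≤ 2 * A * U ^ ((9 : ℝ) / 10) * Real.log B / B ^ ((8 : ℝ) / 5) := by gcongr

end
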